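/- arXiv:2112.10884 — 6 statements merged into one kernel-verified Lean document; each statement's English description precedes it below -/
import Mathlib

section
/- Let G = (V,E) be a finite diamond-free DAG, let X ∈ V be removable in G, and let Y ∈ Mb(X). Then Y ∈ CP(X) if and only if there exists Z ∈ Mb(X)∖{Y} such that Mb(X)∖{Y,Z} d-separates X and Y in G. -/
/-!
Write `W` for a common child of `X` and a co-parent `Y`.

Removability of `X` forces two local conditions on the children of `X`: every child of `X` is
adjacent to every other neighbor of `X` (`Removable.adj_child`), and if `W → W'` are children of
`X`, then every other parent of `W` is a parent of `W'` (`Removable.parent_child`). In both cases a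
violation gives two vertices that are non-adjacent after deleting `X`, hence d-separated there by
the parents of one of them (`dSep_parents`), although an explicit path through `X` is open in the
full graph.

Combined with diamond-freeness, these conditions show that a child `W` of `X` having a parent `Y`
not adjacent to `X` receives an edge from every other child of `X`, and that all parents of those
other children are adjacent to `X`. Hence all co-parents of `X` are parents of `W`, no proper
descendant of `W` lies in `Mb(X)`, and `Mb(X) ∖ {Y, W}` blocks every path from `X` to `Y`: a path
leaving through a parent is blocked at once, one leaving through a child `W₁ ≠ W` is blocked at
`W₁` or at the vertex after it, and one leaving through `W` is blocked at the first collider,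
which is `W` or a descendant of it (`blocked_of_out`). Taking `Z = W` proves one direction; the
other holds because adjacent vertices are never d-separated.
-/

open Set

variable {V : Type*}

/-- Adjacency (neighbor relation) in a directed graph with edge relation `E`. -/
def Adj (E : V → V → Prop) (x y : V) : Prop := E x y ∨ E y x

/-- The digraph `E` is acyclic (no directed cycles). -/
def Acyclic (E : V → V → Prop) : Prop := ∀ v : V, ¬ Relation.TransGen E v v

/-- Parents of `x`. -/
def Pa (E : V → V → Prop) (x : V) : Set V := {y | E y x}

/-- Children of `x`. -/
def Ch (E : V → V → Prop) (x : V) : Set V := {y | E x y}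

/-- Co-parents of `x`: distinct, non-adjacent vertices sharing a child with `x`. -/
def CP (E : V → V → Prop) (x : V) : Set V :=
  {y | y ≠ x ∧ ¬ Adj E x y ∧ ∃ w, E x w ∧ E y w}

/-- The (graphical) Markov boundary of `x`. -/
def Mb (E : V → V → Prop) (x : V) : Set V := Pa E x ∪ Ch E x ∪ CP E x

/-- `y` is a descendant of `x`: directed path of length ≥ 1. -/
def Desc (E : V → V → Prop) : V → V → Prop := Relation.TransGen E

/-- `p : Fin (n+1) → V` is a path: distinct vertices with consecutive vertices adjacent. -/
def IsPath (E : V → V → Prop) {n : ℕ} (p : Fin (n + 1) → V) : Prop :=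
  Function.Injective p ∧ ∀ i : Fin n, Adj E (p i.castSucc) (p i.succ)

/-- The path `p` is blocked by the set `S`: some interior non-collider vertex lies in `S`,
or some interior collider vertex is such that neither it nor any of its descendants lies in `S`. -/
def Blocked (E : V → V → Prop) (S : Set V) {n : ℕ} (p : Fin (n + 1) → V) : Prop :=
  ∃ k : ℕ, ∃ _hk0 : 0 < k, ∃ _hkn : k < n,
    (¬ (E (p ⟨k - 1, by omega⟩) (p ⟨k, by omega⟩) ∧
          E (p ⟨k + 1, by omega⟩) (p ⟨k, by omega⟩)) ∧ p ⟨k, by omega⟩ ∈ S) ∨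
    ((E (p ⟨k - 1, by omega⟩) (p ⟨k, by omega⟩) ∧
          E (p ⟨k + 1, by omega⟩) (p ⟨k, by omega⟩)) ∧ p ⟨k, by omega⟩ ∉ S ∧
        ∀ d, Desc E (p ⟨k, by omega⟩) d → d ∉ S)

/-- `S` d-separates the distinct vertices `x` and `y` in the digraph `E`. -/
def DSep (E : V → V → Prop) (x y : V) (S : Set V) : Prop :=
  x ≠ y ∧ x ∉ S ∧ y ∉ S ∧
    ∀ (n : ℕ) (p : Fin (n + 1) → V), 0 < n → IsPath E p →
      p 0 = x → p (Fin.last n) = y → Blocked E S p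

/-- The induced subgraph obtained from `E` by deleting the vertex `x`. -/
def Del (E : V → V → Prop) (x : V) : V → V → Prop := fun a b => E a b ∧ a ≠ x ∧ b ≠ x

/-- `x` is removable in `E`: d-separation statements not involving `x` are the same
in `E` and in the induced subgraph with `x` deleted. -/
def Removable (E : V → V → Prop) (x : V) : Prop :=
  ∀ y z : V, y ≠ x → z ≠ x → y ≠ z → ∀ S : Set V, x ∉ S →
    (DSep E y z S ↔ DSep (Del E x) y z S)

/-- The clique number of the skeleton of `E` is at most `m`. -/
def CliqueNumLE (E : V → V → Prop) (m : ℕ) : Prop :=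
  ∀ K : Finset V, (∀ x ∈ K, ∀ y ∈ K, x ≠ y → Adj E x y) → K.card ≤ m

/-- Conditions (i) and (ii) for every `S ⊆ Mb(x)` with `|S| ≤ t`. -/
def RemCond (E : V → V → Prop) (x : V) (t : ℕ) : Prop :=
  ∀ S : Finset V, ↑S ⊆ Mb E x → S.card ≤ t →
    (∀ y ∈ Mb E x \ ↑S, ∀ z ∈ Mb E x \ ↑S, y ≠ z →
        ¬ DSep E y z ((Mb E x ∪ {x}) \ ({y, z} ∪ ↑S))) ∧
    ∀ y ∈ Mb E x \ ↑S, ¬ DSep E x y (Mb E x \ ({y} ∪ ↑S))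

/-- `E` is diamond-free: whenever `a`, `b`, `c` are all parents of some vertex `d` and `a`
is adjacent to both `b` and `c`, then `b` and `c` are adjacent. -/
def DiamondFree (E : V → V → Prop) : Prop :=
  ∀ a b c d : V, a ≠ b → a ≠ c → b ≠ c → E a d → E b d → E c d →
    Adj E a b → Adj E a c → Adj E b c

theorem Acyclic.irrefl {E : V → V → Prop} (h : Acyclic E) {a b : V} (hab : E a b) : a ≠ b := by
  rintro rfl
  exact h a (.single hab)

theorem Acyclic.asymm {E : V → V → Prop} (h : Acyclic E) {a b : V} (hab : E a b) : ¬ E b a :=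
  fun hba => h a (.tail (.single hab) hba)

theorem Acyclic.del {E : V → V → Prop} (h : Acyclic E) (x : V) : Acyclic (Del E x) :=
  fun v hv => h v (hv.lift id fun _ _ hab => hab.1)

theorem IsPath.adj {E : V → V → Prop} {n : ℕ} {p : Fin (n + 1) → V} (hp : IsPath E p)
    (k : ℕ) (hk : k < n) : Adj E (p ⟨k, by omega⟩) (p ⟨k + 1, by omega⟩) :=
  hp.2 ⟨k, hk⟩

/-- A path that starts with an edge `p 0 → p 1` and does not end at `p 1` or a descendant of it
must turn around at a collider among these vertices; if `S` avoids all of them, that collider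
blocks the path. -/
theorem blocked_of_out {E : V → V → Prop} {S : Set V} {n : ℕ} {p : Fin (n + 1) → V}
    (hp : IsPath E p) (hn : 0 < n) (h0 : E (p 0) (p ⟨1, by omega⟩))
    (hlast : ¬ Relation.ReflTransGen E (p ⟨1, by omega⟩) (p (Fin.last n)))
    (hS : ∀ d, Relation.ReflTransGen E (p ⟨1, by omega⟩) d → d ∉ S) : Blocked E S p := by
  by_contra hb
  have key : ∀ k : ℕ, ∀ hk : k + 1 ≤ n, E (p ⟨k, by omega⟩) (p ⟨k + 1, by omega⟩) ∧
      Relation.ReflTransGen E (p ⟨1, by omega⟩) (p ⟨k + 1, by omega⟩) := by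
    intro k
    induction k with
    | zero => exact fun hk => ⟨h0, .refl⟩
    | succ k ih =>
      intro hk
      obtain ⟨h1, h2⟩ := ih (by omega)
      rcases hp.adj (k + 1) (by omega) with h | h
      · exact ⟨h, h2.tail h⟩
      · exact absurd ⟨k + 1, by omega, by omega, Or.inr ⟨⟨h1, h⟩, hS _ h2,
          fun d hd => hS d (h2.trans hd.to_reflTransGen)⟩⟩ hb
  obtain ⟨m, rfl⟩ : ∃ m, n = m + 1 := ⟨n - 1, by omega⟩
  exact hlast (key m le_rfl).2

/-- Local Markov property: non-adjacent `a` and `b`, with `b` not a descendant of `a`, are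
d-separated by the parents of `a`. -/
theorem dSep_parents {E : V → V → Prop} (hE : Acyclic E) {a b : V} (hne : a ≠ b)
    (hadj : ¬ Adj E a b) (hd : ¬ Relation.TransGen E a b) : DSep E a b (Pa E a) := by
  refine ⟨hne, fun h => hE a (.single h), fun h => hadj (Or.inr h), ?_⟩
  rintro n p hn hp rfl rfl
  rcases hp.adj 0 hn with h | h
  · refine blocked_of_out hp hn h (fun hr => hd (.head' h hr)) fun d hr hdS => ?_
    exact hE _ ((Relation.TransGen.head' h hr).tail hdS)
  · have hn1 : n ≠ 1 := by
      rintro rfl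
      exact hadj (Or.inr h)
    exact ⟨1, one_pos, by omega, Or.inl ⟨fun hc => hE.asymm h hc.1, h⟩⟩

theorem DSep.not_adj {E : V → V → Prop} {a b : V} {S : Set V} (h : DSep E a b S) :
    ¬ Adj E a b := by
  intro hadj
  obtain ⟨hne, -, -, h⟩ := h
  obtain ⟨k, hk0, hk1, -⟩ := h 1 ![a, b] one_pos
    ⟨by intro i j; fin_cases i <;> fin_cases j <;> simp [hne, hne.symm],
      by intro i; fin_cases i; simpa using hadj⟩ rfl rfl
  omega

/-- If a set avoiding `x` d-separates two neighbors `a`, `b` of `x`, then `x` is a collider on the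
path `a, x, b`, since a non-collider outside `S` leaves it open. -/
theorem DSep.collider {E : V → V → Prop} {a x b : V} {S : Set V} (h : DSep E a b S)
    (hxS : x ∉ S) (hax : a ≠ x) (hbx : b ≠ x) (h1 : Adj E a x) (h2 : Adj E x b) :
    E a x ∧ E b x := by
  by_contra hnc
  obtain ⟨hne, -, -, h⟩ := h
  obtain ⟨k, hk0, hk1, hk⟩ := h 2 ![a, x, b] two_pos
    ⟨by intro i j; fin_cases i <;> fin_cases j <;>
          simp [hne, hne.symm, hax, hbx, hax.symm, hbx.symm],
      by intro i; fin_cases i; exacts [h1, h2]⟩ rfl rfl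
  obtain rfl : k = 1 := by omega
  rcases hk with hk | hk
  · exact hxS hk.2
  · exact hnc hk.1

/-- Every child of a removable vertex is adjacent to its other neighbors. -/
theorem Removable.adj_child {E : V → V → Prop} (hE : Acyclic E) {X W T : V}
    (hrem : Removable E X) (hW : E X W) (hT : Adj E X T) (hne : T ≠ W) : Adj E T W := by
  by_contra hadj
  have hWX : W ≠ X := (hE.irrefl hW).symm
  have hTX : T ≠ X := hT.elim (fun h => (hE.irrefl h).symm) hE.irrefl
  have hD := hE.del X
  by_cases hd : Relation.TransGen (Del E X) T W
  · have hs : DSep (Del E X) W T (Pa (Del E X) W) := by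
      refine dSep_parents hD hne.symm ?_ fun h => hD _ (h.trans hd)
      exact fun h => hadj (h.elim (fun h => Or.inr h.1) fun h => Or.inl h.1)
    have hs' := (hrem W T hWX hTX hne.symm _ fun h => h.2.1 rfl).2 hs
    exact hE.asymm hW (hs'.collider (fun h => h.2.1 rfl) hWX hTX (Or.inr hW) hT).1
  · have hs : DSep (Del E X) T W (Pa (Del E X) T) := by
      refine dSep_parents hD hne ?_ hd
      exact fun h => hadj (h.elim (fun h => Or.inl h.1) fun h => Or.inr h.1)
    have hs' := (hrem T W hTX hWX hne _ fun h => h.2.1 rfl).2 hs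
    exact hE.asymm hW (hs'.collider (fun h => h.2.1 rfl) hTX hWX hT.symm (Or.inl hW)).2

/-- If `W → W'` are children of a removable vertex `X`, all other parents of `W` are parents
of `W'`: otherwise `W' ← X → W ← T` is open given the parents of `W'` other than `X`. -/
theorem Removable.parent_child {E : V → V → Prop} (hE : Acyclic E) {X W W' T : V}
    (hrem : Removable E X) (hW : E X W) (hW' : E X W') (hWW' : E W W') (hT : E T W)
    (hTX : T ≠ X) : E T W' := by
  by_contra hn
  have hWX : W ≠ X := (hE.irrefl hW).symm
  have hW'X : W' ≠ X := (hE.irrefl hW').symm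
  have hcyc : ∀ {c}, c = T → ¬ Relation.TransGen E W' c := by
    rintro _ rfl h
    exact hE _ ((h.tail hT).tail hWW')
  have hne : W' ≠ T := by
    rintro rfl
    exact hE.asymm hT hWW'
  have hs : DSep (Del E X) W' T (Pa (Del E X) W') := by
    refine dSep_parents (hE.del X) hne ?_ fun h => hcyc rfl (h.lift id fun _ _ hab => hab.1)
    rintro (h | h)
    · exact hcyc rfl (.single h.1)
    · exact hn h.1
  obtain ⟨-, -, -, h⟩ := (hrem W' T hW'X hTX hne _ fun h => h.2.1 rfl).2 hs
  have hTW := hE.irrefl hT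
  have hne2 := hE.irrefl hWW'
  obtain ⟨k, hk0, hk1, hk⟩ := h 3 ![W', X, W, T] (by omega)
    ⟨by intro i j; fin_cases i <;> fin_cases j <;>
          simp [hne, hne.symm, hWX, hWX.symm, hW'X, hW'X.symm, hTX, hTX.symm, hTW, hTW.symm,
            hne2, hne2.symm],
      by intro i; fin_cases i; exacts [Or.inr hW', Or.inl hW, Or.inr hT]⟩ rfl rfl
  obtain rfl | rfl : k = 1 ∨ k = 2 := by omega
  · rcases hk with hk | hk
    · exact hk.2.2.1 rfl
    · exact hE.asymm hW' hk.1.1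
  · rcases hk with hk | hk
    · exact hk.1 ⟨hW, hT⟩
    · exact hk.2.1 ⟨hWW', hWX, hW'X⟩

/-- in a diamond-free DAG, for removable `X` and `Y ∈ Mb(X)`,
`Y` is a co-parent of `X` iff some `Z ∈ Mb(X) ∖ {Y}` makes `Mb(X) ∖ {Y,Z}` a separator. -/
theorem stmt8 [Fintype V] (E : V → V → Prop) (hacy : Acyclic E)
    (hdf : DiamondFree E) (X : V) (hrem : Removable E X) (Y : V) (hY : Y ∈ Mb E X) :
    Y ∈ CP E X ↔
      ∃ Z ∈ Mb E X \ {Y}, DSep E X Y (Mb E X \ ({Y, Z} : Set V)) := by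
  constructor
  · rintro ⟨hYX, hnadj, W, hXW, hYW⟩
    have hWY : W ≠ Y := (hacy.irrefl hYW).symm
    -- If `W → W₁`, then `Y → W₁`, and `W`, `X`, `Y` with `W₁` form a diamond.
    have hlast : ∀ W₁, E X W₁ → W₁ ≠ W → E W₁ W := by
      intro W₁ h1 hne
      rcases hrem.adj_child hacy hXW (Or.inl h1) hne with h | h
      · exact h
      · have hY1 := hrem.parent_child hacy hXW h1 h hYW hYX
        exact absurd (hdf W X Y W₁ (hacy.irrefl hXW).symm hWY hYX.symm h h1 hY1
          (Or.inr hXW) (Or.inr hYW)) hnadj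
    have hpar : ∀ W₁ T, E X W₁ → W₁ ≠ W → E T W₁ → T ≠ X → Adj E X T ∧ T ≠ W := by
      intro W₁ T h1 hne hT hTX
      have h2 := hlast W₁ h1 hne
      refine ⟨hdf W₁ X T W (hacy.irrefl h1).symm (hacy.irrefl hT).symm hTX.symm h2 hXW
        (hrem.parent_child hacy h1 hXW h2 hT hTX) (Or.inr h1) (Or.inr hT), ?_⟩
      rintro rfl
      exact hacy.asymm h2 hT
    have hmb : ∀ d, Relation.TransGen E W d → d ∉ Mb E X := by
      rintro d hd ((h | h) | ⟨hne, hna, w, h1, h2⟩)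
      · exact hacy _ ((hd.tail h).tail hXW)
      · refine hacy _ (hd.tail (hlast d h ?_))
        rintro rfl
        exact hacy _ hd
      · by_cases hw : w = W
        · subst hw
          exact hacy _ (hd.tail h2)
        · exact hna (hpar w d h1 hw h2 hne).1
    have hS : ∀ d, Adj E X d → d ≠ W → d ∈ Mb E X \ ({Y, W} : Set V) := by
      intro d hd hne
      refine ⟨Or.inl hd.symm, ?_⟩
      rintro (rfl | rfl)
      · exact hnadj hd
      · exact hne rfl
    refine ⟨W, ⟨Or.inl (Or.inr hXW), hWY⟩, hYX.symm, ?_, fun h => h.2 (Or.inl rfl), ?_⟩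
    · rintro ⟨(h | h) | h, -⟩
      · exact hacy _ (.single h)
      · exact hacy _ (.single h)
      · exact h.1 rfl
    rintro n p hn hp h0 hl
    have h01 : Adj E X (p ⟨1, by omega⟩) := h0 ▸ hp.adj 0 hn
    have hn1 : n ≠ 1 := by
      rintro rfl
      exact hnadj (hl ▸ h01)
    by_cases hW1 : p ⟨1, by omega⟩ = W
    · refine blocked_of_out hp hn (by rw [h0, hW1]; exact hXW) ?_ ?_
      · rw [hW1, hl]
        intro h
        exact hacy _ (Relation.TransGen.tail' h hYW)
      · rw [hW1]
        intro d hd hdS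
        rcases Relation.reflTransGen_iff_eq_or_transGen.1 hd with rfl | hd
        · exact hdS.2 (Or.inr rfl)
        · exact hmb d hd hdS.1
    · have h1S := hS _ h01 hW1
      by_cases hc : E X (p ⟨1, by omega⟩) ∧ E (p ⟨2, by omega⟩) (p ⟨1, by omega⟩)
      · have h2X : p ⟨2, by omega⟩ ≠ X := by
          rw [← h0]
          intro h
          simpa using congrArg Fin.val (hp.1 h)
        obtain ⟨h2, h2W⟩ := hpar _ _ hc.1 hW1 hc.2 h2X
        have hn2 : n ≠ 2 := by
          rintro rfl
          exact hnadj (hl ▸ h2)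
        exact ⟨2, two_pos, by omega, Or.inl ⟨fun h => hacy.asymm hc.2 h.1, hS _ h2 h2W⟩⟩
      · refine ⟨1, one_pos, by omega, Or.inl ⟨fun h => hc ⟨?_, h.2⟩, h1S⟩⟩
        rw [← h0]
        exact h.1
  · rintro ⟨Z, -, hsep⟩
    rcases hY with (h | h) | h
    · exact absurd (Or.inr h) hsep.not_adj
    · exact absurd (Or.inl h) hsep.not_adj
    · exact h
end

section
/- Let G = (V,E) be a finite DAG and X ∈ V. Then the following are equivalent: (a) for all distinct Y,Z ∈ Mb(X), the set (Mb(X)∪{X})∖{Y,Z} does not d-separate Y and Z in G; (b) there exists a vertex W ∈ Ch(X)∪{X} such that Mb(X)∪{X} = Pa(W)∪{W}. -/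
/-!
If `Mb X ∪ {X} = Pa W ∪ {W}`, two members of `Mb X` are either adjacent (one of them is `W`) or are
joined by `Y → W ← Z`, whose collider `W` lies in the conditioning set.

Conversely, by finiteness and acyclicity, choose `W ∈ T := Mb X ∪ {X}` with no descendant in `T`.
Members of `T` other than children of `X` have a child in `T` as soon as `X` has one, so `W` is `X`
or a child of `X`; in either case `Pa W ⊆ T`. For `Y ∈ T`, `Y ≠ W`, an open path from `W` to
`Y` cannot start with an edge out of `W`: it would stay directed up to a collider or up to `Y`, and
either way `W` would have a descendant in `T` (`not_out_of_open_path`). So it starts with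
`W ← U`. Then `U ∈ Pa W ⊆ T` is a non-collider, which on an open path forces `U = Y`, that is,
`Y ∈ Pa W`.
-/

open Set

variable {V : Type*}

theorem not_dSep_of_adj (E : V → V → Prop) {Y Z : V} (S : Set V) (h : Adj E Y Z) :
    ¬ DSep E Y Z S := by
  rintro ⟨hne, -, -, hp⟩
  obtain ⟨k, h0, h1, -⟩ := hp 1 ![Y, Z] one_pos
    ⟨by
      intro i j hij
      fin_cases i <;> fin_cases j <;> simp_all [eq_comm],
     by
      intro i
      fin_cases i
      simpa using h⟩ rfl rfl
  omega

theorem not_dSep_of_collider (E : V → V → Prop) (hacy : Acyclic E) {Y Z W : V} {S : Set V}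
    (hY : E Y W) (hZ : E Z W) (hW : W ∈ S) : ¬ DSep E Y Z S := by
  rintro ⟨hne, -, -, hp⟩
  have hYW : Y ≠ W := fun h => hacy W (.single (h ▸ hY))
  have hZW : Z ≠ W := fun h => hacy W (.single (h ▸ hZ))
  obtain ⟨k, h0, h1, hb⟩ := hp 2 ![Y, W, Z] two_pos
    ⟨by
      intro i j hij
      fin_cases i <;> fin_cases j <;> simp_all [eq_comm],
     by
      intro i
      fin_cases i
      · exact Or.inl hY
      · exact Or.inr hZ⟩ rfl rfl
  obtain rfl : k = 1 := by omega
  rcases hb with ⟨hb, -⟩ | ⟨-, hb, -⟩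
  · exact hb ⟨hY, hZ⟩
  · exact hb hW

/-- An open path whose initial vertex has no descendant in `S`, and does not have the final vertex
as a descendant, cannot start with an edge out of its initial vertex: such a path would be directed
until its first collider, which is open only through a descendant in `S`, or until its end. -/
theorem not_out_of_open_path (E : V → V → Prop) {S : Set V} {n : ℕ} {p : Fin (n + 1) → V}
    (hn : 0 < n) (hpath : IsPath E p) (hopen : ¬ Blocked E S p)
    (hS : ∀ d ∈ S, ¬ Desc E (p 0) d) (hlast : ¬ Desc E (p 0) (p (Fin.last n))) :
    ¬ E (p 0) (p ⟨1, by omega⟩) := by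
  intro hE
  have key : ∀ i (hi : i < n), E (p ⟨i, by omega⟩) (p ⟨i + 1, by omega⟩) ∧
      Desc E (p 0) (p ⟨i + 1, by omega⟩) := by
    intro i
    induction i with
    | zero => exact fun hi => ⟨hE, .single hE⟩
    | succ i ih =>
      intro hi
      obtain ⟨h1, h2⟩ := ih (by omega)
      have hadj : Adj E (p ⟨i + 1, by omega⟩) (p ⟨i + 1 + 1, by omega⟩) := hpath.2 ⟨i + 1, hi⟩
      rcases hadj with h | h
      · exact ⟨h, .tail h2 h⟩
      · exact (hopen ⟨i + 1, by omega, hi, Or.inr ⟨⟨h1, h⟩, fun hmem => hS _ hmem h2,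
          fun d hd hmem => hS d hmem (Relation.TransGen.trans h2 hd)⟩⟩).elim
  obtain ⟨m, rfl⟩ : ∃ m, n = m + 1 := ⟨n - 1, by omega⟩
  exact hlast (key m (by omega)).2

/-- Every parent of a child of `X` belongs to `Mb X ∪ {X}`. -/
theorem parent_of_child_mem (E : V → V → Prop) {X W U : V} (hW : E X W) (hU : E U W) :
    U ∈ Mb E X ∪ {X} := by
  by_cases h : U = X
  · exact Or.inr h
  by_cases h1 : E U X
  · exact Or.inl (Or.inl (Or.inl h1))
  by_cases h2 : E X U
  · exact Or.inl (Or.inl (Or.inr h2))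
  · exact Or.inl (Or.inr ⟨h, fun hadj => hadj.elim h2 h1, W, hW, hU⟩)

theorem exists_last [Finite V] (E : V → V → Prop) (hacy : Acyclic E) (T : Set V)
    (hT : T.Nonempty) : ∃ W ∈ T, ∀ d ∈ T, ¬ Desc E W d := by
  let r : V → V → Prop := fun a b => Relation.TransGen E b a
  have : IsTrans V r := ⟨fun _ _ _ h1 h2 => Relation.TransGen.trans h2 h1⟩
  have : Std.Irrefl r := ⟨hacy⟩
  exact (Finite.wellFounded_of_trans_of_irrefl r).has_min T hT

/-- the non-d-separation condition on `Mb(X)` is equivalent to the existence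
of `W ∈ Ch(X) ∪ {X}` with `Mb(X) ∪ {X} = Pa(W) ∪ {W}`. -/
theorem stmt9 [Fintype V] (E : V → V → Prop) (hacy : Acyclic E) (X : V) :
    (∀ Y ∈ Mb E X, ∀ Z ∈ Mb E X, Y ≠ Z →
        ¬ DSep E Y Z ((Mb E X ∪ {X}) \ ({Y, Z} : Set V))) ↔
      ∃ W ∈ Ch E X ∪ {X}, Mb E X ∪ {X} = Pa E W ∪ {W} := by
  constructor
  · intro h
    obtain ⟨W, hWT, hlast⟩ := exists_last E hacy (Mb E X ∪ {X}) ⟨X, Or.inr rfl⟩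
    have hW : W ∈ Ch E X ∪ {X} := by
      rcases hWT with ((hPa | hCh) | ⟨-, -, w, hXw, hWw⟩) | hX
      · exact (hlast X (Or.inr rfl) (.single hPa)).elim
      · exact Or.inl hCh
      · exact (hlast w (Or.inl (Or.inl (Or.inr hXw))) (.single hWw)).elim
      · exact Or.inr hX
    have hPa : ∀ U, E U W → U ∈ Mb E X ∪ {X} := by
      intro U hU
      rcases hW with hW | hW
      · exact parent_of_child_mem E hW hU
      · obtain rfl : W = X := hW
        exact Or.inl (Or.inl (Or.inl hU))
    refine ⟨W, hW, Subset.antisymm ?_ ?_⟩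
    · intro Y hY
      by_cases hYW : Y = W
      · exact Or.inr hYW
      left
      by_cases hWX : W = X
      · -- With `W = X`, the vertex `X` is childless, so `Mb X` is just `Pa X`.
        subst hWX
        rcases hY with ((hPaY | hCh) | ⟨-, -, w, hXw, -⟩) | hX
        · exact hPaY
        · exact (hlast Y (Or.inl (Or.inl (Or.inr hCh))) (.single hCh)).elim
        · exact (hlast w (Or.inl (Or.inl (Or.inr hXw))) (.single hXw)).elim
        · exact (hYW hX).elim
      have hXW : E X W := hW.resolve_right hWX
      by_cases hYX : Y = X
      · exact hYX ▸ hXW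
      have hnd := h W (hWT.resolve_right hWX) Y (hY.resolve_right hYX) (Ne.symm hYW)
      by_contra hYPa
      refine hnd ⟨Ne.symm hYW, fun hh => hh.2 (Or.inl rfl), fun hh => hh.2 (Or.inr rfl), ?_⟩
      intro n p hn hpath hp0 hpn
      by_contra hopen
      have hout : ¬ E (p 0) (p ⟨1, by omega⟩) :=
        not_out_of_open_path E hn hpath hopen
          (fun d hd => hp0 ▸ hlast d hd.1) (by rw [hp0, hpn]; exact hlast Y hY)
      have hadj : Adj E (p 0) (p ⟨1, by omega⟩) := hpath.2 ⟨0, hn⟩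
      have hin : E (p ⟨1, by omega⟩) W := hp0 ▸ hadj.resolve_left hout
      have hUY : p ⟨1, by omega⟩ ≠ Y := fun hh => hYPa (hh ▸ hin)
      have hn1 : 1 < n := by
        by_contra hcon
        obtain rfl : n = 1 := by omega
        exact hUY hpn
      refine hopen ⟨1, one_pos, hn1, Or.inl ⟨fun hc => hout hc.1, hPa _ hin, ?_⟩⟩
      rintro (hh | hh)
      · exact hacy W (.single (by rwa [hh] at hin))
      · exact hUY hh
    · rintro U (hU | hU)
      · exact hPa U hU
      · obtain rfl : U = W := hU
        exact hWT
  · rintro ⟨W, -, hT⟩ Y hY Z hZ hYZ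
    have hY' : Y ∈ Pa E W ∪ {W} := hT ▸ Or.inl hY
    have hZ' : Z ∈ Pa E W ∪ {W} := hT ▸ Or.inl hZ
    have hWT : W ∈ Mb E X ∪ {X} := hT ▸ Or.inr rfl
    by_cases hYW : Y = W
    · subst hYW
      exact not_dSep_of_adj E _ (Or.inr (hZ'.resolve_right (Ne.symm hYZ)))
    by_cases hZW : Z = W
    · subst hZW
      exact not_dSep_of_adj E _ (Or.inl (hY'.resolve_right hYZ))
    refine not_dSep_of_collider E hacy (hY'.resolve_right hYW) (hZ'.resolve_right hZW) ⟨hWT, ?_⟩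
    rintro (hh | hh)
    · exact hYW hh.symm
    · exact hZW hh.symm
end

section
/- Let G = (V,E) be a finite DAG and let X ∈ V be removable in G. Then there exists a vertex W ∈ Ch(X)∪{X} such that Mb(X)∪{X} = Pa(W)∪{W}. -/
/-!
If `X` has no children, then `Mb X = Pa X` and `W = X` works. Otherwise take for `W` a child of `X`
none of whose descendants is a child of `X`; such a `W` exists since `E` is finite and acyclic.

A parent of `W` other than `X` is adjacent to `X` or shares the child `W` with it, so
`Pa W ⊆ Mb X ∪ {X}` is immediate. For the converse, let `S` be the set of parents of `W` in the
graph with `X` deleted. If `Y` is neither adjacent to `W` nor a descendant of it, then `S`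
d-separates `Y` and `W` in that graph (`dsep_pa`), hence, `X` being removable, also in `E`. But a
neighbor `Y` of `X` is joined to `W` by `Y - X → W`, and a co-parent `Y` with common child `Z ≠ W`
by `Y → Z ← X → W`, where `Z ∈ S` by the case of neighbors. Neither path is blocked by `S`, so `Y`
is a parent of `W` in both cases; it is no descendant of `W`, by acyclicity and the choice of `W`.
-/

open Set

variable {V : Type*}

/-- Local Markov property: in a DAG, the parents of `w` d-separate `w` from every non-descendant
that is not a parent. -/
theorem dsep_pa (E : V → V → Prop) (hacy : Acyclic E) {y w : V} (hne : y ≠ w)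
    (hyw : ¬ E y w) (hdesc : ¬ Relation.TransGen E w y) : DSep E y w (Pa E w) := by
  refine ⟨hne, hyw, fun h => hacy w (.single h), ?_⟩
  intro n p hn hp h0 hl
  by_contra hb
  -- On an unblocked path, every edge, read from the end `w` backwards, points away from `w`.
  have key : ∀ j k : ℕ, ∀ h : k + 1 + j = n,
      E (p ⟨k + 1, by omega⟩) (p ⟨k, by omega⟩) ∧
        Relation.TransGen E w (p ⟨k, by omega⟩) := by
    intro j
    induction j with
    | zero =>
      intro k h
      have hlast : p ⟨k + 1, by omega⟩ = w := by
        rw [← hl]; congr 1; ext; simp; omega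
      have hadj := hp.2 ⟨k, by omega⟩
      simp only [Fin.castSucc_mk, Fin.succ_mk, hlast] at hadj
      rcases hadj with hadj | hadj
      · exfalso
        rcases Nat.eq_zero_or_pos k with rfl | hk
        · have h0' : p ⟨0, by omega⟩ = y := h0
          rw [h0'] at hadj
          exact hyw hadj
        · refine hb ⟨k, hk, by omega, Or.inl ⟨fun hc => ?_, hadj⟩⟩
          have h2 := hc.2
          rw [hlast] at h2
          exact hacy w (.tail (.single h2) hadj)
      · rw [hlast]
        exact ⟨hadj, .single hadj⟩
    | succ j ih =>
      intro k h
      obtain ⟨h1, h2⟩ := ih (k + 1) (by omega)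
      have hadj := hp.2 ⟨k, by omega⟩
      simp only [Fin.castSucc_mk, Fin.succ_mk] at hadj
      rcases hadj with hadj | hadj
      · -- Here `p (k + 1)` is a collider that descends from `w`, so acyclicity keeps it and its
        -- descendants out of `Pa w`.
        exact absurd ⟨k + 1, by omega, by omega, Or.inr ⟨⟨hadj, h1⟩,
          fun hm => hacy w (.tail h2 hm),
          fun d hd hm => hacy w (.tail (h2.trans hd) hm)⟩⟩ hb
      · exact ⟨hadj, .tail h2 hadj⟩
  have h := (key (n - 1) 0 (by omega)).2
  have h0' : p ⟨0, by omega⟩ = y := h0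
  rw [h0'] at h
  exact hdesc h

/-- If `X` is removable and some path from `y` to `w` is not blocked by the parents of `w` other
than `X`, then a non-descendant `y` of `w` is a parent of `w`. -/
theorem edge_of_not_blocked (E : V → V → Prop) (hacy : Acyclic E) {X y w : V}
    (hrem : Removable E X) (hyX : y ≠ X) (hwX : w ≠ X) (hne : y ≠ w)
    (hdesc : ¬ Relation.TransGen E w y) {n : ℕ} (p : Fin (n + 1) → V) (hn : 0 < n)
    (hp : IsPath E p) (h0 : p 0 = y) (hl : p (Fin.last n) = w)
    (hb : ¬ Blocked E (Pa (Del E X) w) p) : E y w := by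
  by_contra hyw
  have hmono : ∀ a b, Relation.TransGen (Del E X) a b → Relation.TransGen E a b :=
    fun a b h => Relation.TransGen.mono (r := Del E X) (fun _ _ h => h.1) a b h
  have hsep : DSep (Del E X) y w (Pa (Del E X) w) :=
    dsep_pa _ (fun v h => hacy v (hmono _ _ h)) hne (fun h => hyw h.1)
      (fun h => hdesc (hmono _ _ h))
  have := (hrem y w hyX hwX hne _ (fun h => h.2.1 rfl)).2 hsep
  exact hb (this.2.2.2 n p hn hp h0 hl)

/-- if `X` is removable then some `W ∈ Ch(X) ∪ {X}` satisfies
`Mb(X) ∪ {X} = Pa(W) ∪ {W}`. -/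
theorem stmt10 [Fintype V] (E : V → V → Prop) (hacy : Acyclic E) (X : V)
    (hrem : Removable E X) :
    ∃ W ∈ Ch E X ∪ {X}, Mb E X ∪ {X} = Pa E W ∪ {W} := by
  have hirr : ∀ a, ¬ E a a := fun a h => hacy a (.single h)
  have hasym : ∀ a b, E a b → ¬ E b a := fun a b h h' => hacy a (.tail (.single h) h')
  by_cases hch : ∃ w, E X w
  swap
  · refine ⟨X, Or.inr rfl, ?_⟩
    ext y
    simp only [Mb, Pa, Ch, CP, mem_union, mem_ofPred_eq, mem_singleton_iff]
    grind
  obtain ⟨W, hW, hmax⟩ : ∃ W, E X W ∧ ∀ Z, E X Z → ¬ Relation.TransGen E W Z := by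
    let r : V → V → Prop := fun a b => Relation.TransGen E b a
    have : IsTrans V r := ⟨fun a b c h1 h2 => Relation.TransGen.trans h2 h1⟩
    have : Std.Irrefl r := ⟨hacy⟩
    have wf : WellFounded r := Finite.wellFounded_of_trans_of_irrefl r
    obtain ⟨W, hW, h⟩ := wf.has_min {w | E X w} hch
    exact ⟨W, hW, fun Z hZ hd => h Z hZ hd⟩
  have hWX : W ≠ X := fun h => hirr X (h ▸ hW)
  have hnb : ∀ Y, Adj E X Y → Y ≠ W → E Y W := by
    intro Y hY hYW
    have hYX : Y ≠ X := by
      rintro rfl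
      exact hY.elim (hirr _) (hirr _)
    have hdesc : ¬ Relation.TransGen E W Y := by
      rcases hY with h | h
      · exact hmax Y h
      · exact fun hd => hacy X (((Relation.TransGen.single hW).trans hd).tail h)
    refine edge_of_not_blocked E hacy hrem hYX hWX hYW hdesc ![Y, X, W] (by norm_num)
      ⟨?_, ?_⟩ rfl rfl ?_
    · intro i j hij
      fin_cases i <;> fin_cases j <;> simp_all [eq_comm]
    · intro i
      fin_cases i
      · exact hY.symm
      · exact Or.inl hW
    · rintro ⟨k, hk0, hk2, h⟩
      obtain rfl : k = 1 := by omega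
      rcases h with ⟨-, h⟩ | ⟨⟨-, h⟩, -⟩
      · exact h.2.1 rfl
      · exact hasym _ _ hW h
  have hcp : ∀ Y, Y ∈ CP E X → E Y W := by
    rintro Y ⟨hYX, hYadj, Z, hXZ, hYZ⟩
    by_cases hZW : Z = W
    · exact hZW ▸ hYZ
    have hZX : Z ≠ X := fun h => hirr X (h ▸ hXZ)
    have hYW : Y ≠ W := fun h => hYadj (Or.inl (h ▸ hW))
    have hYZ' : Y ≠ Z := fun h => hirr Z (h ▸ hYZ)
    have hZWe : E Z W := hnb Z (Or.inl hXZ) hZW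
    refine edge_of_not_blocked E hacy hrem hYX hWX hYW (fun hd => hmax Z hXZ (hd.tail hYZ))
      ![Y, Z, X, W] (by norm_num) ⟨?_, ?_⟩ rfl rfl ?_
    · intro i j hij
      fin_cases i <;> fin_cases j <;> simp_all [eq_comm]
    · intro i
      fin_cases i
      · exact Or.inl hYZ
      · exact Or.inr hXZ
      · exact Or.inl hW
    · rintro ⟨k, hk0, hk3, h⟩
      obtain rfl | rfl : k = 1 ∨ k = 2 := by omega
      · rcases h with ⟨h, -⟩ | ⟨-, h, -⟩
        · exact h ⟨hYZ, hXZ⟩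
        · exact h ⟨hZWe, hZX, hWX⟩
      · rcases h with ⟨-, h⟩ | ⟨⟨-, h⟩, -⟩
        · exact h.2.1 rfl
        · exact hasym _ _ hW h
  refine ⟨W, Or.inl hW, ?_⟩
  ext y
  constructor
  · rintro (((h | h) | h) | h)
    · exact Or.inl (hnb y (Or.inr h) fun he => hasym _ _ hW (he ▸ h))
    · by_cases hy : y = W
      · exact Or.inr hy
      · exact Or.inl (hnb y (Or.inl h) hy)
    · exact Or.inl (hcp y h)
    · exact Or.inl (by rw [mem_singleton_iff.1 h]; exact hW)
  · rintro (h | h)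
    · by_cases hy : y = X
      · exact Or.inr hy
      left
      by_cases h1 : E y X
      · exact Or.inl (Or.inl h1)
      by_cases h2 : E X y
      · exact Or.inl (Or.inr h2)
      exact Or.inr ⟨hy, fun ha => ha.elim h2 h1, W, hW, h⟩
    · rw [mem_singleton_iff.1 h]
      exact Or.inl (Or.inl (Or.inr hW))
end

section
/- Let G = (V,E) be a finite DAG, X ∈ V, and let k be a fixed integer with 1 ≤ k ≤ |Ch(X)|. Suppose that for every S ⊆ Mb(X) with |S| ≤ k−1: (i) for all distinct Y,Z ∈ Mb(X)∖S, the set (Mb(X)∪{X})∖({Y,Z}∪S) does not d-separate Y and Z in G; and (ii) for all Y ∈ Mb(X)∖S, the set Mb(X)∖({Y}∪S) does not d-separate X and Y in G. Then there exist distinct children W₁,…,W_k ∈ Ch(X) such that: (1) W_j ∈ Pa(W_i) for all 1 ≤ i < j ≤ k; and (2) every Y ∈ Mb(X)∖{W₁,…,W_k} satisfies Y ∈ Pa(W_i) for all 1 ≤ i ≤ k. -/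
/-!
The children `W₁, …, W_k` are found one at a time. Let `S` be the set of those already chosen, and
suppose every vertex of `Mb(X) \ S` is a parent of every vertex of `S`. Then no vertex of
`Mb(X) \ S` is a descendant of a vertex of `S`, by acyclicity.

Condition (ii) for `S` implies that each co-parent `Y ∈ Mb(X) \ S` has a common child with `X`
outside `S` (`exists_common_child`): otherwise `Mb(X) \ ({Y} ∪ S)` would d-separate `X` and `Y`.
Consequently, if `w` is a child of `X` outside `S` having no descendant among the other such
children, then no vertex of `Mb(X) \ S` is a descendant of `w`. All parents of `w` lie in
`(Mb(X) ∪ {X}) \ S`, so if some `Y ∈ Mb(X) \ S`, `Y ≠ w`, were not a parent of `w`, the set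
`(Mb(X) ∪ {X}) \ ({w, Y} ∪ S)` would d-separate `w` and `Y`, contradicting (i). Hence `w` may be
added to `S` (`exists_next_child`).

Paths leaving a vertex along an outgoing edge are blocked by `blocked_of_forward`: such a path
either is directed up to its end or meets a collider among the descendants.
-/

open Set

variable {V : Type*}

/-- If a path traverses an edge into `p (j+1)` forwards, and neither the separating set nor the
endpoint of the path meets the descendants of `p (j+1)` (itself included), then the path is blocked:
it cannot stay directed up to its end, so it has a collider below `p (j+1)`. -/
lemma blocked_of_forward {E : V → V → Prop} {T : Set V} {n : ℕ} {p : Fin (n + 1) → V}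
    (hp : IsPath E p) (j : ℕ) (hj : j + 1 < n + 1)
    (hE : E (p ⟨j, by omega⟩) (p ⟨j + 1, hj⟩))
    (hT : ∀ v, Relation.ReflTransGen E (p ⟨j + 1, hj⟩) v → v ∉ T ∧ v ≠ p (Fin.last n)) :
    Blocked E T p := by
  induction hm : n - j generalizing j with
  | zero => omega
  | succ m ih =>
    have hne : j + 1 ≠ n := by
      rintro rfl
      exact (hT _ Relation.ReflTransGen.refl).2 rfl
    have hadj : Adj E (p ⟨j + 1, hj⟩) (p ⟨j + 1 + 1, by omega⟩) := hp.2 ⟨j + 1, by omega⟩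
    by_cases hc : E (p ⟨j + 1 + 1, by omega⟩) (p ⟨j + 1, hj⟩)
    · exact ⟨j + 1, by omega, by omega, Or.inr ⟨⟨hE, hc⟩, (hT _ Relation.ReflTransGen.refl).1,
        fun d hd => (hT d hd.to_reflTransGen).1⟩⟩
    · have hf := hadj.resolve_right hc
      exact ih (j + 1) (by omega) hf (fun v hv => hT v (.head hf hv)) (by omega)

lemma not_edge_symm {E : V → V → Prop} (hacy : Acyclic E) {a b : V} (h : E a b) : ¬ E b a :=
  fun h' => hacy a (.tail (.single h) h')

lemma mem_Mb_of_parent_child {E : V → V → Prop} {X c q : V} (hc : E X c) (hq : E q c)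
    (hne : q ≠ X) : q ∈ Mb E X := by
  by_cases h : Adj E X q
  · rcases h with h | h
    · exact Or.inl (Or.inr h)
    · exact Or.inl (Or.inl h)
  · exact Or.inr ⟨hne, h, c, hc, hq⟩

/-- Each co-parent of `X` outside `S` shares a child with `X` outside `S`, as otherwise
`Mb(X) \ ({Y} ∪ S)` would d-separate it from `X`. -/
lemma exists_common_child {E : V → V → Prop} (hacy : Acyclic E) {X : V} {S : Set V}
    (hSch : S ⊆ Ch E X) (hfeed : ∀ Y ∈ Mb E X \ S, ∀ s ∈ S, E Y s)
    (hii : ∀ y ∈ Mb E X \ S, ¬ DSep E X y (Mb E X \ ({y} ∪ S)))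
    {Y : V} (hY : Y ∈ CP E X) (hYS : Y ∉ S) : ∃ c, E X c ∧ E Y c ∧ c ∉ S := by
  by_contra! hno
  have hYM : Y ∈ Mb E X \ S := ⟨Or.inr hY, hYS⟩
  obtain ⟨hYX, hnadj, -⟩ := hY
  have hXM : X ∉ Mb E X := by
    rintro ((h | h) | h)
    · exact hacy X (.single h)
    · exact hacy X (.single h)
    · exact h.1 rfl
  refine hii Y hYM ⟨hYX.symm, fun h => hXM h.1, fun h => h.2 (Or.inl rfl), ?_⟩
  intro n p hn hp h0 hlast
  have h0' : p ⟨0, by omega⟩ = X := h0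
  have hadj : Adj E (p ⟨0, by omega⟩) (p ⟨1, by omega⟩) := hp.2 ⟨0, hn⟩
  rw [h0'] at hadj
  have hn1 : 1 < n := by
    by_contra hle
    obtain rfl : n = 1 := by omega
    have h1 : p ⟨1, by omega⟩ = Y := hlast
    exact hnadj (h1 ▸ hadj)
  have h1Y : p ⟨1, by omega⟩ ≠ Y := fun h => hnadj (h ▸ hadj)
  by_cases h1S : p ⟨1, by omega⟩ ∈ S
  · -- Descendants of a vertex `s ∈ S` avoid `Mb(X) \ S`, whose members are parents of `s`.
    have hdesc : ∀ v, Relation.ReflTransGen E (p ⟨1, by omega⟩) v → v ∉ Mb E X \ S :=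
      fun v hv hvM => hacy _ (.tail' hv (hfeed v hvM _ h1S))
    refine blocked_of_forward hp 0 (by omega) (by rw [h0']; exact hSch h1S) ?_
    intro v hv
    refine ⟨fun h => hdesc v hv ⟨h.1, fun hs => h.2 (Or.inr hs)⟩, ?_⟩
    rintro rfl
    exact hdesc _ hv (hlast ▸ hYM)
  have h1M : p ⟨1, by omega⟩ ∈ Mb E X := by
    rcases hadj with h | h
    · exact Or.inl (Or.inr h)
    · exact Or.inl (Or.inl h)
  by_cases hcol : E (p ⟨0, by omega⟩) (p ⟨1, by omega⟩) ∧ E (p ⟨2, by omega⟩) (p ⟨1, by omega⟩)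
  · -- Here the path starts `X → c ← q` with `c ∉ S`; the non-collider `q` blocks it.
    obtain ⟨hXc, hqc⟩ := hcol
    rw [h0'] at hXc
    have hqX : p ⟨2, by omega⟩ ≠ X := by
      rw [← h0']
      intro h
      simpa using hp.1 h
    have hqY : p ⟨2, by omega⟩ ≠ Y := fun h => h1S (hno _ hXc (h ▸ hqc))
    have hqS : p ⟨2, by omega⟩ ∉ S := fun h =>
      not_edge_symm hacy hqc (hfeed _ ⟨h1M, h1S⟩ _ h)
    have hn2 : 2 < n := by
      by_contra hle
      obtain rfl : n = 2 := by omega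
      exact hqY hlast
    refine ⟨2, by omega, hn2, Or.inl ⟨fun h => not_edge_symm hacy hqc h.1, ?_⟩⟩
    refine ⟨mem_Mb_of_parent_child hXc hqc hqX, ?_⟩
    rintro (h | h)
    · exact hqY h
    · exact hqS h
  · refine ⟨1, by omega, hn1, Or.inl ⟨hcol, h1M, ?_⟩⟩
    rintro (h | h)
    · exact h1Y h
    · exact h1S h

/-- The set `S` of children into which the rest of `Mb(X)` feeds can be enlarged by a child `w`
that is last in the descendant order among the children outside `S`. -/
lemma exists_next_child [Fintype V] {E : V → V → Prop} (hacy : Acyclic E) {X : V} {S : Set V}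
    (hSch : S ⊆ Ch E X) (hfeed : ∀ Y ∈ Mb E X \ S, ∀ s ∈ S, E Y s)
    (hi : ∀ y ∈ Mb E X \ S, ∀ z ∈ Mb E X \ S, y ≠ z →
      ¬ DSep E y z ((Mb E X ∪ {X}) \ ({y, z} ∪ S)))
    (hii : ∀ y ∈ Mb E X \ S, ¬ DSep E X y (Mb E X \ ({y} ∪ S)))
    (hne : (Ch E X \ S).Nonempty) :
    ∃ w ∈ Ch E X \ S, ∀ Y ∈ Mb E X \ S, Y ≠ w → E Y w := by
  have hwf : WellFounded (fun a b : V => Relation.TransGen E b a) := by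
    have : IsTrans V (fun a b : V => Relation.TransGen E b a) := ⟨fun a b c h h' => h'.trans h⟩
    have : Std.Irrefl (fun a b : V => Relation.TransGen E b a) := ⟨hacy⟩
    exact Finite.wellFounded_of_trans_of_irrefl _
  obtain ⟨w, ⟨hwX, hwS⟩, hmin⟩ := hwf.has_min _ hne
  have hwX' : E X w := hwX
  have hwM : w ∈ Mb E X := Or.inl (Or.inr hwX)
  have hdesc : ∀ v ∈ Mb E X \ S, ¬ Relation.TransGen E w v := by
    rintro v ⟨(hv | hv) | hv, hvS⟩ hwv
    · exact hacy X ((hwv.head hwX').tail hv)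
    · exact hmin v ⟨hv, hvS⟩ hwv
    · obtain ⟨c, hXc, hvc, hcS⟩ := exists_common_child hacy hSch hfeed hii hv hvS
      exact hmin c ⟨hXc, hcS⟩ (hwv.tail hvc)
  refine ⟨w, ⟨hwX, hwS⟩, fun Y hY hYw => ?_⟩
  by_contra hYpar
  refine hi w ⟨hwM, hwS⟩ Y hY hYw.symm ⟨hYw.symm, fun h => h.2 (by simp), fun h => h.2 (by simp), ?_⟩
  intro n p hn hp h0 hlast
  have h0' : p ⟨0, by omega⟩ = w := h0
  have hadj : Adj E (p ⟨0, by omega⟩) (p ⟨1, by omega⟩) := hp.2 ⟨0, hn⟩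
  rcases hadj with hout | hin
  · refine blocked_of_forward hp 0 (by omega) hout ?_
    rw [h0'] at hout
    intro v hv
    have hwv : Relation.TransGen E w v := .head' hout hv
    refine ⟨?_, ?_⟩
    · rintro ⟨hv' | rfl, hvn⟩
      · exact hdesc v ⟨hv', fun h => hvn (Or.inr h)⟩ hwv
      · exact hacy _ (hwv.head hwX')
    · rintro rfl
      exact hdesc Y hY (hlast ▸ hwv)
  · have hq : E (p ⟨1, by omega⟩) w := h0' ▸ hin
    have hqY : p ⟨1, by omega⟩ ≠ Y := fun h => hYpar (h ▸ hq)
    have hqw : p ⟨1, by omega⟩ ≠ w := fun h => hacy w (.single (by rwa [h] at hq))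
    have hqS : p ⟨1, by omega⟩ ∉ S := fun h => not_edge_symm hacy hq (hfeed w ⟨hwM, hwS⟩ _ h)
    have hn1 : 1 < n := by
      by_contra hle
      obtain rfl : n = 1 := by omega
      exact hqY hlast
    refine ⟨1, by omega, hn1, Or.inl ⟨fun h => not_edge_symm hacy hin h.1, ?_, ?_⟩⟩
    · by_cases hqX : p ⟨1, by omega⟩ = X
      · exact Or.inr hqX
      · exact Or.inl (mem_Mb_of_parent_child hwX' hq hqX)
    · rintro ((h | h) | h)
      · exact hqw h
      · exact hqY h
      · exact hqS h

/-- existence of a chain of `k` children of `X` into which all of `Mb(X)`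
feeds, under conditions (i)-(ii) for sets of size at most `k - 1`. -/
theorem stmt12 [Fintype V] (E : V → V → Prop) (hacy : Acyclic E) (X : V) (k : ℕ)
    (hk1 : 1 ≤ k) (hk2 : k ≤ (Ch E X).ncard) (hX : RemCond E X (k - 1)) :
    ∃ W : Fin k → V, Function.Injective W ∧ (∀ i, W i ∈ Ch E X) ∧
      (∀ i j : Fin k, i < j → W j ∈ Pa E (W i)) ∧
      (∀ Y ∈ Mb E X \ Set.range W, ∀ i, Y ∈ Pa E (W i)) := by
  classical
  suffices H : ∀ m ≤ k, ∃ W : Fin m → V, Function.Injective W ∧ (∀ i, W i ∈ Ch E X) ∧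
      (∀ i j : Fin m, i < j → W j ∈ Pa E (W i)) ∧
      (∀ Y ∈ Mb E X \ Set.range W, ∀ i, Y ∈ Pa E (W i)) from H k le_rfl
  intro m
  induction m with
  | zero =>
    intro _
    exact ⟨Fin.elim0, fun i => i.elim0, fun i => i.elim0, fun i => i.elim0, fun _ _ i => i.elim0⟩
  | succ m ih =>
    intro hm
    obtain ⟨W, hinj, hch, hchain, hall⟩ := ih (by omega)
    have hsub : Set.range W ⊆ Ch E X := by
      rintro _ ⟨i, rfl⟩
      exact hch i
    have hcard : (Finset.univ.image W).card = m := by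
      rw [Finset.card_image_of_injective _ hinj, Finset.card_fin]
    have hcoe : (↑(Finset.univ.image W) : Set V) = Set.range W := by simp
    have hnc : (Set.range W).ncard = m := by
      rw [← hcoe, Set.ncard_coe_finset, hcard]
    have hrem := hX (Finset.univ.image W)
      (by rw [hcoe]; exact fun v hv => Or.inl (Or.inr (hsub hv))) (by omega)
    rw [hcoe] at hrem
    have hne : (Ch E X \ Set.range W).Nonempty :=
      Set.sdiff_nonempty_of_ncard_lt_ncard (by omega) (Set.toFinite _)
    obtain ⟨w, ⟨hwX, hwS⟩, hw⟩ := exists_next_child hacy hsub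
      (fun Y hY s ⟨i, hi⟩ => hi ▸ hall Y hY i) hrem.1 hrem.2 hne
    have hwM : w ∈ Mb E X := Or.inl (Or.inr hwX)
    refine ⟨Fin.snoc W w, Fin.snoc_injective_iff.2 ⟨hinj, hwS⟩, ?_, ?_, ?_⟩
    · intro i
      refine Fin.lastCases ?_ (fun i => ?_) i
      · simpa using hwX
      · simpa using hch i
    · intro i j
      refine Fin.lastCases ?_ (fun i => ?_) i
      · intro h
        exact absurd h (not_lt.2 (Fin.le_last j))
      · refine Fin.lastCases ?_ (fun j => ?_) j
        · intro _
          simpa using hall w ⟨hwM, hwS⟩ i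
        · intro h
          simpa using hchain i j (by simpa using h)
    · rintro Y ⟨hYM, hY⟩ i
      have hYw : Y ≠ w := fun h => hY ⟨Fin.last m, by simp [h]⟩
      have hYW : Y ∉ Set.range W := by
        rintro ⟨l, rfl⟩
        exact hY ⟨l.castSucc, by simp⟩
      refine Fin.lastCases ?_ (fun i => ?_) i
      · simpa [Pa] using hw Y ⟨hYM, hYW⟩ hYw
      · simpa using hall Y ⟨hYM, hYW⟩ i
end

section
/- Let G = (V,E) be a finite DAG and let X ∈ V be removable in G. Then every parent of X is a parent of every child of X: for all Y ∈ Pa(X) and W ∈ Ch(X), Y ∈ Pa(W). Consequently, if Ch(X) ≠ ∅, then any two distinct parents Y,Z of X have a common child different from X. -/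
/-!
Let `Y → X → W` and suppose that `Y` is not a parent of `W`. By acyclicity `Y` is neither equal to
`W` nor a descendant of `W`. The local Markov property (`dsep_parents`), applied in the graph with
`X` deleted, shows that the parents of `W` other than `X` d-separate `Y` from `W` there. In the
full graph the same set does not block the path `Y → X → W`, as its only interior vertex `X` is a
non-collider outside the set. This contradicts removability. For the second claim, any child of `X`
is a common child of `Y` and `Z`, and it differs from `X` by acyclicity.
-/

open Set

variable {V : Type*}

/-- Local Markov property: the parents of `w` d-separate `w` from every non-descendant that is
not a parent. -/
theorem dsep_parents {E : V → V → Prop} (hacy : Acyclic E) {y w : V} (hne : y ≠ w)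
    (hdesc : ¬ Desc E w y) (hyw : ¬ E y w) : DSep E y w (Pa E w) := by
  refine ⟨hne, hyw, fun h => hacy w (.single h), ?_⟩
  intro n p hn hp h0 hl
  by_contra hb
  -- On an unblocked path every step, read backwards from `w`, follows an edge direction, since
  -- the first reversal would be a collider all of whose descendants are descendants of `w`.
  have key : ∀ m : ℕ, ∀ hm : m < n,
      E (p ⟨n - m, by omega⟩) (p ⟨n - 1 - m, by omega⟩) ∧ Desc E w (p ⟨n - 1 - m, by omega⟩) := by
    intro m
    induction m with
    | zero =>
      intro hm
      have hw : p ⟨n, by omega⟩ = w := hl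
      have hadj : Adj E (p ⟨n - 1, by omega⟩) w := by
        have h := hp.2 ⟨n - 1, by omega⟩
        have e : (⟨n - 1, by omega⟩ : Fin n).succ = ⟨n, by omega⟩ := by
          ext; simp; omega
        rw [e, hw] at h
        exact h
      rcases hadj with h | h
      · exfalso
        by_cases h1 : n = 1
        · subst h1
          exact hyw (h0 ▸ h)
        · -- The last interior vertex is a parent of `w`, hence a non-collider in the set.
          refine hb ⟨n - 1, by omega, by omega, Or.inl ⟨?_, h⟩⟩
          rintro ⟨-, h2⟩
          have e : (⟨n - 1 + 1, by omega⟩ : Fin (n + 1)) = ⟨n, by omega⟩ := by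
            ext; simp; omega
          rw [e, hw] at h2
          exact hacy w (.tail (.single h2) h)
      · simp only [Nat.sub_zero]
        rw [hw]
        exact ⟨h, .single h⟩
    | succ m ih =>
      intro hm
      obtain ⟨he, hd⟩ := ih (by omega)
      have hadj : Adj E (p ⟨n - 1 - (m + 1), by omega⟩) (p ⟨n - 1 - m, by omega⟩) := by
        have h := hp.2 ⟨n - 1 - (m + 1), by omega⟩
        have e : (⟨n - 1 - (m + 1), by omega⟩ : Fin n).succ = ⟨n - 1 - m, by omega⟩ := by
          ext; simp; omega
        rw [e] at h
        exact h
      have e0 : (⟨n - (m + 1), by omega⟩ : Fin (n + 1)) = ⟨n - 1 - m, by omega⟩ := by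
        ext; simp; omega
      rw [e0]
      rcases hadj with h | h
      · exfalso
        have e1 : (⟨n - 1 - m - 1, by omega⟩ : Fin (n + 1)) = ⟨n - 1 - (m + 1), by omega⟩ := by
          ext; simp; omega
        have e2 : (⟨n - 1 - m + 1, by omega⟩ : Fin (n + 1)) = ⟨n - m, by omega⟩ := by
          ext; simp; omega
        refine hb ⟨n - 1 - m, by omega, by omega, Or.inr ⟨⟨?_, ?_⟩, ?_, ?_⟩⟩
        · rw [e1]; exact h
        · rw [e2]; exact he
        · exact fun hS => hacy w (Relation.TransGen.tail hd hS)
        · exact fun d hdd hS =>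
            hacy w (Relation.TransGen.tail (Relation.TransGen.trans hd hdd) hS)
      · exact ⟨h, Relation.TransGen.tail hd h⟩
  have h := (key (n - 1) (by omega)).2
  have e : (⟨n - 1 - (n - 1), by omega⟩ : Fin (n + 1)) = 0 := by
    ext; simp
  rw [e, h0] at h
  exact hdesc h

/-- A directed path `y → x → w` is not blocked by a set that avoids `x`. -/
theorem not_dsep_chain {E : V → V → Prop} (hacy : Acyclic E) {y x w : V} (hyx : E y x)
    (hxw : E x w) {S : Set V} (hx : x ∉ S) : ¬ DSep E y w S := by
  rintro ⟨hne, -, -, h⟩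
  have h1 : y ≠ x := by rintro rfl; exact hacy _ (.single hyx)
  have h2 : x ≠ w := by rintro rfl; exact hacy _ (.single hxw)
  obtain ⟨k, hk0, hk2, hk⟩ := h 2 ![y, x, w] (by norm_num)
    ⟨by
      intro i j hij
      fin_cases i <;> fin_cases j <;> simp_all,
     by
      intro i
      fin_cases i
      · exact Or.inl hyx
      · exact Or.inl hxw⟩ rfl rfl
  obtain rfl : k = 1 := by omega
  rcases hk with ⟨-, hS⟩ | ⟨⟨-, hc⟩, -⟩
  · exact hx hS
  · have hc' : E w x := hc
    exact hacy x (.tail (.single hxw) hc')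

theorem removable_parent_child {E : V → V → Prop} (hacy : Acyclic E) {X : V}
    (hrem : Removable E X) {Y W : V} (hY : E Y X) (hW : E X W) : E Y W := by
  by_contra hYW
  have h1 : Y ≠ X := by rintro rfl; exact hacy _ (.single hY)
  have h2 : W ≠ X := by rintro rfl; exact hacy _ (.single hW)
  have h3 : Y ≠ W := by rintro rfl; exact hacy _ (.tail (.single hY) hW)
  have hmono : ∀ a b, Desc (Del E X) a b → Desc E a b := fun a b h =>
    Relation.TransGen.mono (r := Del E X) (p := E) (fun _ _ h => h.1) a b h
  refine not_dsep_chain hacy hY hW (S := Pa (Del E X) W) (fun h => h.2.1 rfl) ?_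
  refine (hrem Y W h1 h2 h3 _ (fun h => h.2.1 rfl)).2 ?_
  refine dsep_parents (fun v h => hacy v (hmono v v h)) h3 (fun h => ?_) (fun h => hYW h.1)
  exact hacy W (Relation.TransGen.tail (Relation.TransGen.tail (hmono _ _ h) hY) hW)

/-- every parent of a removable vertex is a parent of each of its children;
consequently, if `Ch(X) ≠ ∅`, any two distinct parents of `X` share a child other than `X`. -/
theorem stmt13 [Fintype V] (E : V → V → Prop) (hacy : Acyclic E) (X : V)
    (hrem : Removable E X) :
    (∀ Y ∈ Pa E X, ∀ W ∈ Ch E X, Y ∈ Pa E W) ∧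
    ((Ch E X).Nonempty →
      ∀ Y ∈ Pa E X, ∀ Z ∈ Pa E X, Y ≠ Z → ∃ W, W ≠ X ∧ E Y W ∧ E Z W) := by
  refine ⟨fun Y hY W hW => removable_parent_child hacy hrem hY hW, ?_⟩
  rintro ⟨W, hW⟩ Y hY Z hZ -
  refine ⟨W, ?_, removable_parent_child hacy hrem hY hW, removable_parent_child hacy hrem hZ hW⟩
  rintro rfl
  exact hacy _ (.single hW)
end

section
/- Let G = (V,E) be a finite diamond-free DAG, let X ∈ V, and let Z ∈ Ch(X) be a child of X with Mb(X)∪{X} = Pa(Z)∪{Z}. Then for every co-parent Y ∈ CP(X), the vertex Z is the unique common child of X and Y, i.e., Ch(X) ∩ Ch(Y) = {Z}. -/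
/-!
Every member of `Mb(X)` other than `Z` is a parent of `Z`, so a co-parent `Y` of `X` is a parent
of `Z` (`Y ≠ Z` since `Y` is not adjacent to `X`). If `W ≠ Z` were another common child of `X` and
`Y`, then `W ∈ Mb(X)` would be a parent of `Z` too, and `W, X, Y` would be three parents of `Z` with
`W` adjacent to the non-adjacent vertices `X` and `Y`: a diamond.
-/

open Set

variable {V : Type*}

/-- in a diamond-free DAG, if `Z ∈ Ch(X)` satisfies
`Mb(X) ∪ {X} = Pa(Z) ∪ {Z}`, then `Z` is the unique common child of `X` and any
co-parent `Y` of `X`. -/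
theorem stmt14 [Fintype V] (E : V → V → Prop) (hacy : Acyclic E)
    (hdf : DiamondFree E) (X Z : V) (hZ : Z ∈ Ch E X)
    (hMb : Mb E X ∪ {X} = Pa E Z ∪ {Z}) :
    ∀ Y ∈ CP E X, Ch E X ∩ Ch E Y = {Z} := by
  intro Y hY
  obtain ⟨hYX, hnadj, -⟩ := id hY
  -- A member of `Mb(X)` other than `Z` is a parent of `Z`.
  have key : ∀ W ∈ Mb E X, W ≠ Z → E W Z := by
    intro W hW hWZ
    have h : W ∈ Pa E Z ∪ {Z} := hMb ▸ Or.inl hW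
    exact h.resolve_right hWZ
  have hirr : ∀ a b, E a b → a ≠ b := by
    rintro a _ h rfl
    exact hacy a (.single h)
  have hYZ : E Y Z := key Y (Or.inr hY) (by
    rintro rfl
    exact hnadj (Or.inl hZ))
  ext W
  constructor
  · rintro ⟨hXW, hYW⟩
    by_contra hWZ
    have hWZ' : E W Z := key W (Or.inl (Or.inr hXW)) hWZ
    -- `W, X, Y, Z` form a diamond.
    exact hnadj (hdf W X Y Z (hirr _ _ hXW).symm (hirr _ _ hYW).symm hYX.symm
      hWZ' hZ hYZ (Or.inr hXW) (Or.inr hYW))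
  · rintro rfl
    exact ⟨hZ, hYZ⟩
end
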